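/- arXiv:1905.00212 — 2 statements merged into one kernel-verified Lean document; each statement's English description precedes it below -/
import Mathlib

section
/- There exists a simple graph on 16 vertices whose automorphism group is isomorphic to the alternating group A₅; in particular the minimal number of vertices of a graph with automorphism group A₅ is at most 16 (improving the bound of 60 coming from a graphical regular representation of A₅). -/
/-- `μ G` is the minimal number of vertices of an undirected simple graph whose
automorphism group is isomorphic to `G`. -/
noncomputable def mu (G : Type*) [Group G] : ℕ :=
  sInf {n : ℕ | ∃ Γ : SimpleGraph (Fin n), Nonempty ((Γ ≃g Γ) ≃* G)}

/-- Vertices as symmetric relations on five letters: six pentagons (0-5), ten edges (6-15). -/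
def codeN (v : Fin 16) : ℕ :=
  [10102962, 13190438, 6480426, 11046540, 3352340, 5360024, 34, 1028, 32776, 1048592, 2176,
    65792, 2097664, 139264, 4210688, 8912896].getD v.val 0

def code (v : Fin 16) (i j : Fin 5) : Bool := (codeN v).testBit (5 * i.val + j.val)

def adjB (v w : Fin 16) : Bool :=
  ([42560, 51392, 28992, 38272, 14976, 20224, 7, 26, 44, 49, 41, 50, 28, 21, 38, 11].getD
    v.val 0).testBit w.val

def gr : SimpleGraph (Fin 16) where
  Adj v w := adjB v w = true
  symm := ⟨by decide +kernel⟩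
  loopless := ⟨by decide +kernel⟩

theorem adjB_iff : ∀ v w, adjB v w = true ↔
    v ≠ w ∧ ((∀ i j, code v i j = true → code w i j = true) ∨
      (∀ i j, code w i j = true → code v i j = true)) := by
  decide +kernel

theorem code_inj : ∀ v w, (∀ i j, code v i j = code w i j) → v = w := by
  decide +kernel

theorem exists_act : ∀ σ : Equiv.Perm (Fin 5), Equiv.Perm.sign σ = 1 →
    ∀ v, ∃ w, ∀ i j, code w (σ i) (σ j) = code v i j := by
  decide +kernel

noncomputable def act (σ : alternatingGroup (Fin 5)) (v : Fin 16) : Fin 16 :=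
  (exists_act σ.1 (Equiv.Perm.mem_alternatingGroup.1 σ.2) v).choose

theorem act_spec (σ : alternatingGroup (Fin 5)) (v : Fin 16) (i j : Fin 5) :
    code (act σ v) (σ.1 i) (σ.1 j) = code v i j :=
  (exists_act σ.1 (Equiv.Perm.mem_alternatingGroup.1 σ.2) v).choose_spec i j

theorem act_unique (σ : alternatingGroup (Fin 5)) (v w : Fin 16)
    (h : ∀ i j, code w (σ.1 i) (σ.1 j) = code v i j) : act σ v = w := by
  apply code_inj
  intro i j
  have h1 := act_spec σ v (σ.1.symm i) (σ.1.symm j)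
  have h2 := h (σ.1.symm i) (σ.1.symm j)
  simp only [Equiv.apply_symm_apply] at h1 h2
  rw [h1, h2]

theorem act_one (v : Fin 16) : act 1 v = v := act_unique _ _ _ (by simp)

theorem act_mul (σ τ : alternatingGroup (Fin 5)) (v : Fin 16) :
    act (σ * τ) v = act σ (act τ v) := by
  apply act_unique
  intro i j
  rw [← act_spec τ v i j, ← act_spec σ (act τ v)]
  rfl

theorem act_sub (σ : alternatingGroup (Fin 5)) (v w : Fin 16) :
    (∀ i j, code (act σ v) i j = true → code (act σ w) i j = true) ↔
      (∀ i j, code v i j = true → code w i j = true) := by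
  constructor
  · intro h i j
    rw [← act_spec σ v i j, ← act_spec σ w i j]
    exact h _ _
  · intro h i j
    have h1 := act_spec σ v (σ.1.symm i) (σ.1.symm j)
    have h2 := act_spec σ w (σ.1.symm i) (σ.1.symm j)
    simp only [Equiv.apply_symm_apply] at h1 h2
    rw [h1, h2]
    exact h _ _

noncomputable def actEquiv (σ : alternatingGroup (Fin 5)) : Fin 16 ≃ Fin 16 where
  toFun := act σ
  invFun := act σ⁻¹
  left_inv v := by rw [← act_mul, inv_mul_cancel, act_one]
  right_inv v := by rw [← act_mul, mul_inv_cancel, act_one]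

noncomputable def actIso (σ : alternatingGroup (Fin 5)) : gr ≃g gr where
  toEquiv := actEquiv σ
  map_rel_iff' := by
    intro v w
    change adjB (act σ v) (act σ w) = true ↔ adjB v w = true
    rw [adjB_iff, adjB_iff, act_sub, act_sub]
    have : act σ v ≠ act σ w ↔ v ≠ w := (actEquiv σ).injective.ne_iff
    rw [this]

noncomputable def phi : alternatingGroup (Fin 5) →* (gr ≃g gr) where
  toFun := actIso
  map_one' := by
    ext v
    exact congrArg Fin.val (act_one v)
  map_mul' σ τ := by
    ext v
    exact congrArg Fin.val (act_mul σ τ v)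

theorem code_perm : ∀ σ : Equiv.Perm (Fin 5),
    (∀ v i j, code v (σ i) (σ j) = code v i j) → σ = 1 := by
  decide +kernel

theorem phi_inj : Function.Injective phi := by
  rw [injective_iff_map_eq_one]
  intro σ h
  apply Subtype.ext
  apply code_perm
  intro v i j
  have h1 := act_spec σ v i j
  have h2 : act σ v = v := DFunLike.congr_fun h v
  rwa [h2] at h1

theorem iso_adj (e : gr ≃g gr) (v w : Fin 16) : adjB (e v) (e w) = adjB v w := by
  have h : adjB (e v) (e w) = true ↔ adjB v w = true := e.map_rel_iff'
  exact Bool.eq_iff_iff.2 h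

def dg (v : Fin 16) : ℕ := (Finset.univ.filter fun w => adjB v w = true).card

theorem dg_iff : ∀ v, v < 6 ↔ dg v = 5 := by decide +kernel

theorem iso_dg (e : gr ≃g gr) (v : Fin 16) : dg (e v) = dg v := by
  symm
  apply Finset.card_equiv e.toEquiv
  intro w
  have := iso_adj e v w
  simp only [Finset.mem_filter, Finset.mem_univ, true_and]
  rw [← this]
  rfl

theorem iso_lt (e : gr ≃g gr) (v : Fin 16) (h : v < 6) : e v < 6 := by
  rw [dg_iff] at h ⊢
  rw [iso_dg, h]

def T : Finset (Fin 16 × Fin 16 × Fin 16) := Finset.univ.filter fun t =>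
  t.1 < 6 ∧ t.2.1 < 6 ∧ t.2.2 < 6 ∧ t.1 ≠ t.2.1 ∧ t.1 ≠ t.2.2 ∧ t.2.1 ≠ t.2.2 ∧
    ∃ b, adjB t.1 b = true ∧ adjB t.2.1 b = true ∧ adjB t.2.2 b = true

theorem T_card : T.card = 60 := by decide +kernel

theorem iso_T (e : gr ≃g gr) : (e 0, e 1, e 2) ∈ T := by
  simp only [T, Finset.mem_filter, Finset.mem_univ, true_and]
  refine ⟨iso_lt e _ (by decide), iso_lt e _ (by decide), iso_lt e _ (by decide),
    e.injective.ne (by decide), e.injective.ne (by decide), e.injective.ne (by decide),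
    e 6, ?_, ?_, ?_⟩ <;> rw [iso_adj] <;> decide +kernel

theorem fix_step (e : gr ≃g gr) (S N : List (Fin 16)) (hS : ∀ s ∈ S, e s = s)
    (h : ∀ v ∈ N, ∀ w, w ∉ S → (∀ s ∈ S, adjB s w = adjB s v) → w = v)
    (hN : ∀ v ∈ N, v ∉ S) : ∀ s ∈ S ++ N, e s = s := by
  intro s hs
  rcases List.mem_append.1 hs with hs | hs
  · exact hS s hs
  · apply h s hs
    · intro hm
      have := e.injective (hS _ hm)
      rw [this] at hm
      exact hN s hs hm
    · intro t ht
      have := iso_adj e t s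
      rwa [hS t ht] at this

theorem fix_all (e : gr ≃g gr) (h0 : e 0 = 0) (h1 : e 1 = 1) (h2 : e 2 = 2) : e = 1 := by
  have a : ∀ s ∈ [(0 : Fin 16), 1, 2], e s = s := by simp [h0, h1, h2]
  have b := fix_step e _ [6, 13, 14, 15] a (by decide +kernel) (by decide +kernel)
  have c := fix_step e _ [3, 4, 5] b (by decide +kernel) (by decide +kernel)
  have d := fix_step e _ [7, 8, 9, 10, 11, 12] c (by decide +kernel) (by decide +kernel)
  have f : ∀ v : Fin 16, v ∈ [(0 : Fin 16), 1, 2] ++ [6, 13, 14, 15] ++ [3, 4, 5] ++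
    [7, 8, 9, 10, 11, 12] := by decide +kernel
  ext v
  exact congrArg Fin.val (d v (f v))

theorem toT_inj : Function.Injective (fun e : gr ≃g gr => (⟨(e 0, e 1, e 2), iso_T e⟩ : T)) := by
  intro e f h
  simp only [Subtype.mk.injEq, Prod.mk.injEq] at h
  obtain ⟨h0, h1, h2⟩ := h
  have key : ∀ v, e v = f v → (f⁻¹ * e) v = v := by
    intro v hv
    change f.symm (e v) = v
    rw [hv]
    exact f.symm_apply_apply v
  have := fix_all (f⁻¹ * e) (key _ h0) (key _ h1) (key _ h2)
  exact (inv_mul_eq_one.1 this).symm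

theorem phi_bij : Function.Bijective phi := by
  have : Finite (gr ≃g gr) := Finite.of_injective _ toT_inj
  have h1 : Nat.card (gr ≃g gr) ≤ 60 := by
    have := Nat.card_le_card_of_injective _ toT_inj
    simpa [T_card] using this
  have h2 : Nat.card (alternatingGroup (Fin 5)) = 60 := by
    have := two_mul_nat_card_alternatingGroup (α := Fin 5)
    rw [Nat.card_perm, Nat.card_eq_fintype_card (α := Fin 5), Fintype.card_fin] at this
    have h5 : Nat.factorial 5 = 120 := rfl
    omega
  exact phi_inj.bijective_of_nat_card_le (by rw [h2]; exact h1)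

/-- There is a simple graph on 16 vertices with automorphism group isomorphic to `A₅`;
in particular `μ(A₅) ≤ 16`. -/
theorem stmt_2 :
    (∃ Γ : SimpleGraph (Fin 16), Nonempty ((Γ ≃g Γ) ≃* alternatingGroup (Fin 5))) ∧
      mu (alternatingGroup (Fin 5)) ≤ 16 := by
  have h : ∃ Γ : SimpleGraph (Fin 16), Nonempty ((Γ ≃g Γ) ≃* alternatingGroup (Fin 5)) :=
    ⟨gr, ⟨(MulEquiv.ofBijective phi phi_bij).symm⟩⟩
  exact ⟨h, Nat.sInf_le h⟩
end

section
/- There exists a simple graph on 16 vertices whose automorphism group is isomorphic to the alternating group A₄; in particular the minimal number of vertices of a graph with automorphism group A₄ is at most 16 (improving Babai's bound 2|A₄| = 24). -/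
/-- Third entry of the even arrangement starting with `i, j`. -/
def nxt (i j : Fin 4) : Fin 4 := (![![0, 2, 3, 1], ![3, 1, 0, 2], ![1, 3, 2, 0], ![2, 0, 1, 3]] : Fin 4 → Fin 4 → Fin 4) i j

abbrev VV := Fin 4 × Fin 4

/-- Directed version of the adjacency. -/
def dR (p q : VV) : Prop :=
  (p.1 = p.2 ∧ q.1 = p.1) ∨ (p.1 ≠ p.2 ∧ q.1 = p.2 ∧ (q.2 = p.1 ∨ q.2 = nxt p.1 p.2))

instance : DecidableRel dR := fun p q => by unfold dR; infer_instance

/-- The graph on pairs. -/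
def GG : SimpleGraph VV where
  Adj p q := p ≠ q ∧ (dR p q ∨ dR q p)
  symm := ⟨fun _ _ h => ⟨h.1.symm, h.2.symm⟩⟩
  loopless := ⟨fun _ h => h.1 rfl⟩

instance : DecidableRel GG.Adj := fun p q =>
  inferInstanceAs (Decidable (p ≠ q ∧ (dR p q ∨ dR q p)))

lemma nxt_inv : ∀ σ : Equiv.Perm (Fin 4), Equiv.Perm.sign σ = 1 →
    ∀ i j, nxt (σ i) (σ j) = σ (nxt i j) := by
  decide +kernel

lemma dR_inv (σ : alternatingGroup (Fin 4)) (p q : VV) :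
    dR (σ.1 p.1, σ.1 p.2) (σ.1 q.1, σ.1 q.2) ↔ dR p q := by
  have h := nxt_inv σ.1 (Equiv.Perm.mem_alternatingGroup.1 σ.2)
  simp [dR, h]

/-- The automorphism attached to an even permutation. -/
def toAut (σ : alternatingGroup (Fin 4)) : GG ≃g GG where
  toEquiv := Equiv.prodCongr σ.1 σ.1
  map_rel_iff' := by
    intro p q
    have h1 := dR_inv σ p q
    have h2 := dR_inv σ q p
    simp only [GG, Equiv.prodCongr_apply, Prod.map]
    rw [h1, h2]
    simp [Prod.ext_iff]

/-- Refinement of a coloring. -/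
def ref (c : VV → ℕ) (x : VV) : ℕ := c x + ∑ y : VV, if GG.Adj x y then 100 ^ (1 + c y) else 0

lemma ref_inv (φ : GG ≃g GG) (c c' : VV → ℕ) (hc : ∀ x, c (φ x) = c x)
    (h : ∀ x z, ref c x = ref c z → c' x = c' z) (x : VV) : c' (φ x) = c' x := by
  refine h _ _ ?_
  unfold ref
  rw [hc, ← Equiv.sum_comp φ.toEquiv]
  refine congrArg (fun t => c x + t) ?_
  refine Finset.sum_congr rfl fun y _ => ?_
  have h1 : GG.Adj (φ x) (φ.toEquiv y) ↔ GG.Adj x y := φ.map_rel_iff'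
  have h2 : c (φ.toEquiv y) = c y := hc y
  simp only [h1, h2]

def tab (t : Fin 4 → Fin 4 → ℕ) (x : VV) : ℕ := t x.1 x.2

def c0 : VV → ℕ := tab ![![0, 1, 0, 0], ![0, 0, 0, 0], ![0, 0, 0, 0], ![0, 0, 0, 0]]
def c1 : VV → ℕ := tab ![![3, 4, 1, 1], ![2, 0, 2, 1], ![2, 1, 0, 1], ![1, 1, 1, 0]]
def c2 : VV → ℕ := tab ![![8, 9, 5, 5], ![6, 2, 7, 3], ![7, 4, 1, 3], ![3, 4, 3, 0]]
def c3 : VV → ℕ := tab ![![14, 15, 9, 10], ![11, 2, 13, 6], ![12, 8, 1, 5], ![4, 7, 3, 0]]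
def c4 : VV → ℕ := tab ![![14, 15, 9, 10], ![11, 2, 13, 6], ![12, 8, 1, 5], ![4, 7, 3, 0]]

lemma aut_diag (φ : GG ≃g GG) (x : VV) :
    (if (φ x).1 = (φ x).2 then 1 else 0) = (if x.1 = x.2 then 1 else 0) :=
  ref_inv φ (fun _ => 0) (fun x => if x.1 = x.2 then 1 else 0) (fun _ => rfl)
    (by decide +kernel) x

lemma c0_spec : ∀ x, c0 x = if x = (0, 1) then 1 else 0 := by decide +kernel
lemma r0 : ∀ x z, ref c0 x = ref c0 z → c1 x = c1 z := by decide +kernel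
lemma r1 : ∀ x z, ref c1 x = ref c1 z → c2 x = c2 z := by decide +kernel
lemma r2 : ∀ x z, ref c2 x = ref c2 z → c3 x = c3 z := by decide +kernel
lemma r3 : ∀ x z, ref c3 x = ref c3 z → c4 x = c4 z := by decide +kernel
lemma c_inj : ∀ x z, c4 x = c4 z → x = z := by decide +kernel

lemma aut_fix (φ : GG ≃g GG) (h : φ (0, 1) = (0, 1)) (x : VV) : φ x = x := by
  have h0 : ∀ x, c0 (φ x) = c0 x := by
    intro x
    have : φ x = (0, 1) ↔ x = (0, 1) := by
      conv_lhs => rw [← h]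
      exact φ.injective.eq_iff
    simp only [c0_spec, this]
  have h1 := ref_inv φ c0 c1 h0 r0
  have h2 := ref_inv φ c1 c2 h1 r1
  have h3 := ref_inv φ c2 c3 h2 r2
  have h4 := ref_inv φ c3 c4 h3 r3
  exact c_inj _ _ (h4 x)

lemma exists_perm : ∀ a b : Fin 4, a ≠ b →
    ∃ σ : Equiv.Perm (Fin 4), Equiv.Perm.sign σ = 1 ∧ σ 0 = a ∧ σ 1 = b := by
  decide +kernel

/-- The homomorphism. -/
def homA : alternatingGroup (Fin 4) →* (GG ≃g GG) where
  toFun := toAut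
  map_one' := by ext x <;> rfl
  map_mul' _ _ := by ext x <;> rfl

lemma homA_bij : Function.Bijective homA := by
  constructor
  · intro σ τ h
    ext i
    have : homA σ (i, i) = homA τ (i, i) := by rw [h]
    exact congrArg Fin.val (congrArg Prod.fst this)
  · intro φ
    have hd : (φ (0, 1)).1 ≠ (φ (0, 1)).2 := by
      intro h
      have := aut_diag φ (0, 1)
      rw [if_pos h] at this
      simp at this
    obtain ⟨σ, hs, h0, h1⟩ := exists_perm _ _ hd
    refine ⟨⟨σ, Equiv.Perm.mem_alternatingGroup.2 hs⟩, ?_⟩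
    set τ : alternatingGroup (Fin 4) := ⟨σ, Equiv.Perm.mem_alternatingGroup.2 hs⟩
    have hτ : homA τ (0, 1) = φ (0, 1) := Prod.ext h0 h1
    have key := aut_fix (φ⁻¹ * homA τ) (by
      change φ.symm (homA τ (0, 1)) = _
      rw [hτ]; exact φ.symm_apply_apply _)
    refine RelIso.ext fun x => ?_
    have hx : φ.symm (homA τ x) = x := key x
    rw [← φ.apply_symm_apply (homA τ x), hx]

/-- Transfer of automorphism groups along a graph isomorphism. -/
def autCongr {V W : Type} {A : SimpleGraph V} {B : SimpleGraph W} (e : A ≃g B) :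
    (A ≃g A) ≃* (B ≃g B) where
  toFun φ := (e.symm.trans φ).trans e
  invFun φ := (e.trans φ).trans e.symm
  left_inv φ := by ext x; simp
  right_inv φ := by ext x; simp
  map_mul' φ ψ := by ext x; simp [RelIso.mul_apply]

lemma main_ex :
    ∃ Γ : SimpleGraph (Fin 16), Nonempty ((Γ ≃g Γ) ≃* alternatingGroup (Fin 4)) := by
  let e : VV ≃ Fin 16 := finProdFinEquiv
  exact ⟨GG.map e.toEmbedding, ⟨(autCongr (SimpleGraph.Iso.map e GG)).symm.trans
    (MulEquiv.ofBijective homA homA_bij).symm⟩⟩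



/-- There is a simple graph on 16 vertices with automorphism group isomorphic to `A₄`;
in particular `μ(A₄) ≤ 16`. -/
theorem stmt_3 :
    (∃ Γ : SimpleGraph (Fin 16), Nonempty ((Γ ≃g Γ) ≃* alternatingGroup (Fin 4))) ∧
      mu (alternatingGroup (Fin 4)) ≤ 16 := by
  exact ⟨main_ex, Nat.sInf_le main_ex⟩
end
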